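/- For every even integer e: the outer automorphism group Out(Γ(e,1)) = Aut(Γ(e,1))/Inn(Γ(e,1)) is isomorphic to S₃ × ℤ/2ℤ, and the outer automorphism group Out(Γ(e,−1)) is isomorphic to (ℤ/2ℤ)². -/

import Mathlib

/-! The group `Γ(e,η)` with presentation `⟨h, x, y, z | x³ = y³ = z^{3η} = h, xyz = hᵉ⟩`,
for an even integer `e` and `η = ±1`.  Generator `0` is `h`, generator `1` is `x`,
generator `2` is `y` and generator `3` is `z`. -/

def gamRels (e η : ℤ) : Set (FreeGroup (Fin 4)) :=
  { (FreeGroup.of 1) ^ 3 * (FreeGroup.of 0)⁻¹,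
    (FreeGroup.of 2) ^ 3 * (FreeGroup.of 0)⁻¹,
    (FreeGroup.of 3) ^ (3 * η) * (FreeGroup.of 0)⁻¹,
    FreeGroup.of 1 * FreeGroup.of 2 * FreeGroup.of 3 * ((FreeGroup.of 0) ^ e)⁻¹ }

/-- The group `Γ(e,η)`. -/
abbrev Gam (e η : ℤ) : Type := PresentedGroup (gamRels e η)

/-- The image of the generator `h` in `Γ(e,η)`. -/
def hG (e η : ℤ) : Gam e η := PresentedGroup.of 0
/-- The image of the generator `x` in `Γ(e,η)`. -/
def xG (e η : ℤ) : Gam e η := PresentedGroup.of 1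
/-- The image of the generator `y` in `Γ(e,η)`. -/
def yG (e η : ℤ) : Gam e η := PresentedGroup.of 2
/-- The image of the generator `z` in `Γ(e,η)`. -/
def zG (e η : ℤ) : Gam e η := PresentedGroup.of 3

/-- `u = z⁻¹x`. -/
def uG (e η : ℤ) : Gam e η := (zG e η)⁻¹ * xG e η
/-- `v = xz⁻¹`. -/
def vG (e η : ℤ) : Gam e η := xG e η * (zG e η)⁻¹


/-!
The centre of `Γ(e,η)` is the cyclic group `⟨h⟩`, infinite because of a representation by `3 × 3`
matrices over `ℤ[ω]`, and `Γ(e,η)/⟨h⟩` is the crystallographic group `p3 = ℤ[ω] ⋊ C₃`, in which `z`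
is the rotation by `ω` about the origin and `u`, `v` are the translations by `1`, `ω`. An
automorphism permutes the three orbits of centres of rotation, one for each residue class modulo the
prime `1 - ω`, and multiplies the angles of rotation by a sign. If it is trivial on both, then an
inner automorphism corrects it to fix `z` modulo `⟨h⟩`, after which it multiplies translations by a
unit congruent to `1` modulo `1 - ω`, that is, by a power of `ω`, and so agrees with conjugation by
a power of `z` modulo `⟨h⟩`. An automorphism that is the identity modulo `⟨h⟩` is the identity:
comparing cubes of generators leaves no room for factors `h ^ k`.

Explicit automorphisms realise every permutation and sign when `η = 1`. When `η = -1` the orbit of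
the centre of `z` is fixed: a rotation by `ω ^ k` about a centre in one of the other two orbits,
those of `x` and `y`, has cube `h ^ m` with `m ≡ k` modulo `3`. If `σ` moved the orbit of `z`, this
would apply to `σ z` and to one of `σ x`, `σ y`, whose angles agree, and contradict
`z³ x³ = z³ y³ = 1`.
-/

namespace Gam

open scoped QuadraticAlgebra
open Multiplicative (ofAdd toAdd)

section Powers

variable {G : Type*} [Group G] {n : ℕ}

/-- The homomorphism `k ↦ g ^ k` from the cyclic group of order `n`, for `g` with `g ^ n = 1`. -/
def zmodPowersHom (g : G) (hg : g ^ n = 1) : Multiplicative (ZMod n) →* G :=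
  AddMonoidHom.toMultiplicativeLeft
    (ZMod.lift n ⟨zmultiplesHom (Additive G) (Additive.ofMul g), by
      simp [← ofMul_pow, hg]⟩)

@[simp]
lemma zmodPowersHom_ofAdd_intCast (g : G) (hg : g ^ n = 1) (k : ℤ) :
    zmodPowersHom g hg (ofAdd (k : ZMod n)) = g ^ k := by
  change Additive.toMul (ZMod.lift n _ (k : ZMod n)) = g ^ k
  simp

lemma zmodPowersHom_ofAdd_one (g : G) (hg : g ^ n = 1) :
    zmodPowersHom g hg (ofAdd 1) = g := by
  simpa using zmodPowersHom_ofAdd_intCast g hg 1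

lemma exists_ofAdd_one_pow [NeZero n] (k : Multiplicative (ZMod n)) :
    ∃ m : ℕ, k = ofAdd (1 : ZMod n) ^ m :=
  ⟨(toAdd k).val, by rw [← ofAdd_nsmul, nsmul_one, ZMod.natCast_zmod_val]; rfl⟩

end Powers

section Eisenstein

/-- The ring `ℤ[ω]` of Eisenstein integers, where `ω ^ 2 + ω + 1 = 0`. -/
abbrev Eisenstein : Type := QuadraticAlgebra ℤ (-1) (-1)

/-- The primitive cube root of unity `ω`, as a unit of `ℤ[ω]`. -/
def omegaUnit : Eisensteinˣ where
  val := ω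
  inv := ω ^ 2
  val_inv := by ext <;> simp [pow_succ]
  inv_val := by ext <;> simp [pow_succ]

/-- The homomorphism `k ↦ ω ^ k` from the cyclic group of order three to the units of `ℤ[ω]`. -/
def rotation : Multiplicative (ZMod 3) →* Eisensteinˣ :=
  zmodPowersHom omegaUnit (by ext <;> simp [omegaUnit, pow_succ])

@[simp]
lemma rotation_ofAdd_one : (rotation (ofAdd 1) : Eisenstein) = ω := by
  simp [rotation, zmodPowersHom_ofAdd_one, omegaUnit]

lemma rotation_ofAdd_one_sq : (rotation (ofAdd 1 ^ 2) : Eisenstein) = -1 - ω := by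
  rw [map_pow, Units.val_pow_eq_pow_val, rotation_ofAdd_one]
  ext <;> simp [pow_succ]

lemma rotation_eq_or (k : Multiplicative (ZMod 3)) (hk : k ≠ 1) :
    (rotation k : Eisenstein) = ω ∨ (rotation k : Eisenstein) = -1 - ω := by
  have hcases : k = ofAdd 1 ∨ k = ofAdd 1 ^ 2 := by revert k; decide
  rcases hcases with rfl | rfl
  · exact .inl rotation_ofAdd_one
  · exact .inr rotation_ofAdd_one_sq

lemma one_add_rotation_add_sq (k : Multiplicative (ZMod 3)) (hk : k ≠ 1) :
    1 + (rotation k : Eisenstein) + (rotation k : Eisenstein) ^ 2 = 0 := by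
  rcases rotation_eq_or k hk with h | h <;> rw [h] <;> ext <;> simp [pow_succ]

lemma rotation_ne_one (k : Multiplicative (ZMod 3)) (hk : k ≠ 1) :
    (rotation k : Eisenstein) ≠ 1 := by
  intro h
  have hsum := congrArg QuadraticAlgebra.re (one_add_rotation_add_sq k hk)
  simp [h] at hsum

/-- Reduction of Eisenstein integers modulo the prime `1 - ω`, which has residue field `𝔽₃`. -/
def residue : Eisenstein →+* ZMod 3 :=
  ((QuadraticAlgebra.lift ⟨(1 : ZMod 3), by decide⟩ : Eisenstein →ₐ[ℤ] ZMod 3) : _ →+* _)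

lemma residue_apply (t : Eisenstein) : residue t = t.re + t.im := by
  simp [residue, QuadraticAlgebra.lift]

@[simp]
lemma residue_omega : residue ω = 1 := by simp [residue_apply]

@[simp]
lemma residue_rotation (k : Multiplicative (ZMod 3)) :
    residue (rotation k : Eisenstein) = 1 := by
  obtain ⟨m, rfl⟩ := exists_ofAdd_one_pow k
  simp

lemma one_sub_rotation_dvd (k : Multiplicative (ZMod 3)) (hk : k ≠ 1) (t : Eisenstein)
    (ht : residue t = 0) : 1 - (rotation k : Eisenstein) ∣ t := by
  obtain ⟨m, hm⟩ : (3 : ℤ) ∣ t.re + t.im :=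
    (ZMod.intCast_zmod_eq_zero_iff_dvd _ 3).1 (by simpa [residue_apply] using ht)
  rcases rotation_eq_or k hk with h | h <;> rw [h]
  · exact ⟨⟨2 * m - t.im, m⟩, by ext <;> simp <;> linarith⟩
  · exact ⟨⟨m, t.im - m⟩, by ext <;> simp <;> linarith⟩

lemma exists_rotation_eq_of_isUnit (s : Eisenstein) (hs : IsUnit s) (hres : residue s = 1) :
    ∃ k, (rotation k : Eisenstein) = s := by
  obtain ⟨a, b⟩ := s
  have hnorm : a * a - a * b + b * b = 1 := by
    have hunit := Int.isUnit_iff.1 (QuadraticAlgebra.isUnit_iff_norm_isUnit.1 hs)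
    simp only [QuadraticAlgebra.norm_def] at hunit
    rcases hunit with h | h
    · linarith
    · nlinarith [sq_nonneg (2 * a - b), sq_nonneg b]
  have hb : b ^ 2 ≤ 1 := by nlinarith [sq_nonneg (2 * a - b)]
  have ha : a ^ 2 ≤ 1 := by nlinarith [sq_nonneg (2 * b - a)]
  rw [sq_le_one_iff_abs_le_one, abs_le] at ha hb
  simp only [residue_apply] at hres
  obtain ⟨ha₁, ha₂⟩ := ha
  obtain ⟨hb₁, hb₂⟩ := hb
  interval_cases a <;> interval_cases b <;> first
    | exact absurd hnorm (by decide)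
    | exact absurd hres (by decide)
    | skip
  · exact ⟨ofAdd 1 ^ 2, rotation_ofAdd_one_sq⟩
  · exact ⟨ofAdd 1, rotation_ofAdd_one⟩
  · exact ⟨1, by rw [map_one]; rfl⟩

end Eisenstein

section PlaneGroup

/-- The action of the cyclic group of order three on the lattice `ℤ[ω]` by rotations. -/
def rotationAction : Multiplicative (ZMod 3) →* MulAut (Multiplicative Eisenstein) :=
  ((MulAutMultiplicative Eisenstein).symm.toMonoidHom.comp AddAut.mulLeft).comp rotation

@[simp]
lemma rotationAction_apply (k : Multiplicative (ZMod 3)) (t : Multiplicative Eisenstein) :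
    rotationAction k t = ofAdd (rotation k * toAdd t) := rfl

/-- The crystallographic group `p3`, generated by the translations of the plane by Eisenstein
integers and the rotation by `ω` about the origin. It is `Γ(e,η)` modulo its centre `⟨h⟩`. -/
abbrev PlaneGroup : Type := Multiplicative Eisenstein ⋊[rotationAction] Multiplicative (ZMod 3)

lemma PlaneGroup.pow_three_eq_one (p : PlaneGroup) (hp : p.right ≠ 1) : p ^ 3 = 1 := by
  have hright : p.right ^ 3 = 1 := by generalize p.right = k; revert k; decide
  have hsum : toAdd p.left + rotation p.right * toAdd p.left
      + rotation p.right * (rotation p.right * toAdd p.left) = 0 := by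
    linear_combination toAdd p.left * one_add_rotation_add_sq p.right hp
  refine SemidirectProduct.ext ?_ (by simpa [pow_succ] using hright)
  apply toAdd.injective
  simpa [pow_succ, add_assoc] using hsum

variable {H : Type*} [Group H]

/-- The homomorphism `a + b ω ↦ u ^ a * v ^ b` defined by two commuting elements `u` and `v`. -/
def latticeHom (u v : H) (huv : Commute u v) : Multiplicative Eisenstein →* H where
  toFun t := u ^ (toAdd t).re * v ^ (toAdd t).im
  map_one' := by simp
  map_mul' s t := by
    simp only [toAdd_mul, QuadraticAlgebra.re_add, QuadraticAlgebra.im_add, zpow_add]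
    have := (huv.zpow_zpow (toAdd t).re (toAdd s).im)
    simp only [mul_assoc, this.left_comm]

lemma latticeHom_ofAdd_one (u v : H) (huv : Commute u v) :
    latticeHom u v huv (ofAdd 1) = u := by simp [latticeHom]

lemma conj_latticeHom (u v z : H) (huv : Commute u v) (hzu : z * u * z⁻¹ = v)
    (hzv : z * v * z⁻¹ = (u * v)⁻¹) (t : Multiplicative Eisenstein) :
    latticeHom u v huv (rotationAction (ofAdd 1) t) = MulAut.conj z (latticeHom u v huv t) := by
  simp only [latticeHom, MonoidHom.coe_mk, OneHom.coe_mk, rotationAction_apply, rotation_ofAdd_one,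
    map_mul, map_zpow, MulAut.conj_apply, hzu, hzv, inv_zpow', huv.mul_zpow]
  have hvu := (huv.symm.zpow_zpow (toAdd t).re (toAdd t).im).inv_right
  simp [zpow_add, ← mul_assoc, hvu.eq]

/-- The homomorphism from `p3` sending `1` and `ω` in the lattice to `u` and `v` and the rotation
to `z`. -/
def PlaneGroup.lift (u v z : H) (huv : Commute u v) (hz : z ^ 3 = 1)
    (hzu : z * u * z⁻¹ = v) (hzv : z * v * z⁻¹ = (u * v)⁻¹) : PlaneGroup →* H :=
  SemidirectProduct.lift (latticeHom u v huv) (zmodPowersHom z hz) (by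
    intro k
    obtain ⟨m, rfl⟩ := exists_ofAdd_one_pow k
    simp only [map_pow, zmodPowersHom_ofAdd_one]
    refine MonoidHom.ext fun t => ?_
    induction m with
    | zero => simp
    | succ m ih =>
      simp only [pow_succ', MonoidHom.comp_apply, MulEquiv.coe_toMonoidHom,
        MulAut.mul_apply] at ih ⊢
      rw [conj_latticeHom u v z huv hzu hzv, ih])

end PlaneGroup

section Presentation

variable {e η : ℤ}

lemma xG_pow_three : xG e η ^ 3 = hG e η :=
  mul_inv_eq_one.1 (PresentedGroup.one_of_mem (rels := gamRels e η) (by simp [gamRels]))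

lemma yG_pow_three : yG e η ^ 3 = hG e η :=
  mul_inv_eq_one.1 (PresentedGroup.one_of_mem (rels := gamRels e η) (by simp [gamRels]))

lemma zG_zpow : zG e η ^ (3 * η) = hG e η :=
  mul_inv_eq_one.1 (PresentedGroup.one_of_mem (rels := gamRels e η) (by simp [gamRels]))

lemma xG_mul_yG_mul_zG : xG e η * yG e η * zG e η = hG e η ^ e :=
  mul_inv_eq_one.1 (PresentedGroup.one_of_mem (rels := gamRels e η) (by simp [gamRels]))

lemma closure_xG_zG : Subgroup.closure {xG e η, zG e η} = ⊤ := by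
  set K := Subgroup.closure {xG e η, zG e η}
  have hx : xG e η ∈ K := Subgroup.subset_closure (by simp)
  have hz : zG e η ∈ K := Subgroup.subset_closure (by simp)
  have hh : hG e η ∈ K := xG_pow_three (e := e) (η := η) ▸ pow_mem hx 3
  have hy : yG e η ∈ K := by
    have hxyz : xG e η * yG e η * zG e η ∈ K := xG_mul_yG_mul_zG ▸ zpow_mem hh e
    exact (K.mul_mem_cancel_left hx).1 ((K.mul_mem_cancel_right hz).1 hxyz)
  rw [eq_top_iff, ← PresentedGroup.closure_range_of, Subgroup.closure_le]
  rintro _ ⟨i, rfl⟩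
  fin_cases i
  exacts [hh, hx, hy, hz]

lemma hom_ext {G : Type*} [Group G] {f f' : Gam e η →* G} (hx : f (xG e η) = f' (xG e η))
    (hz : f (zG e η) = f' (zG e η)) : f = f' :=
  MonoidHom.eq_of_eqOn_dense closure_xG_zG (by rintro _ (rfl | rfl) <;> assumption)

lemma commute_hG (g : Gam e η) : Commute (hG e η) g := by
  have hle : Subgroup.closure {xG e η, zG e η} ≤ Subgroup.centralizer {hG e η} := by
    rw [Subgroup.closure_le]
    rintro _ (rfl | rfl) <;> rw [SetLike.mem_coe, Subgroup.mem_centralizer_singleton_iff]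
    · rw [← xG_pow_three]; exact Commute.self_pow _ _
    · rw [← zG_zpow]; exact Commute.self_zpow _ _
  have hg := hle (closure_xG_zG (e := e) (η := η) ▸ Subgroup.mem_top g)
  exact (Subgroup.mem_centralizer_singleton_iff.1 hg).symm

lemma yG_mul_zG_mul_xG : yG e η * zG e η * xG e η = hG e η ^ e := by
  rw [← mul_left_cancel_iff (a := xG e η), ← mul_assoc, ← mul_assoc, xG_mul_yG_mul_zG]
  exact (commute_hG _).zpow_left e

lemma zG_mul_xG_mul_yG : zG e η * xG e η * yG e η = hG e η ^ e := by
  rw [← mul_left_cancel_iff (a := yG e η), ← mul_assoc, ← mul_assoc, yG_mul_zG_mul_xG]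
  exact (commute_hG _).zpow_left e

lemma zG_mul_xG : zG e η * xG e η = hG e η ^ e * (yG e η)⁻¹ :=
  eq_mul_inv_of_mul_eq zG_mul_xG_mul_yG

lemma zG_pow_three (hη : IsUnit η) : zG e η ^ 3 = hG e η ^ η := by
  rw [← zG_zpow, ← zpow_mul, mul_assoc, ← zpow_natCast]
  rcases Int.isUnit_iff.1 hη with rfl | rfl <;> rfl

lemma zG_mul_uG : zG e η * uG e η = xG e η := mul_inv_cancel_left _ _

section Lift

variable {G : Type*} [Group G]

/-- The homomorphism from `Γ(e,η)` with prescribed values on `x`, `y` and `z`; its value on `h`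
is `X ^ 3`. -/
def lift (X Y Z : G) (hY : Y ^ 3 = X ^ 3) (hZ : Z ^ (3 * η) = X ^ 3)
    (hXYZ : X * Y * Z = (X ^ 3) ^ e) : Gam e η →* G :=
  PresentedGroup.toGroup (f := ![X ^ 3, X, Y, Z]) (by
    intro r hr
    simp only [gamRels, Set.mem_insert_iff, Set.mem_singleton_iff] at hr
    rcases hr with rfl | rfl | rfl | rfl <;> simp [hY, hZ, hXYZ])

section

variable (X Y Z : G) (hY : Y ^ 3 = X ^ 3) (hZ : Z ^ (3 * η) = X ^ 3)
  (hXYZ : X * Y * Z = (X ^ 3) ^ e)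

@[simp]
lemma lift_hG : lift X Y Z hY hZ hXYZ (hG e η) = X ^ 3 := by simp [lift, hG]

@[simp]
lemma lift_xG : lift X Y Z hY hZ hXYZ (xG e η) = X := by simp [lift, xG]

@[simp]
lemma lift_yG : lift X Y Z hY hZ hXYZ (yG e η) = Y := by simp [lift, yG]

@[simp]
lemma lift_zG : lift X Y Z hY hZ hXYZ (zG e η) = Z := by simp [lift, zG]

end

/-- The homomorphism from `Γ(e,η)` with prescribed values on `x` and `z`. Eliminating
`y = (z x)⁻¹ h ^ e` turns `y³ = h` into the condition `hZX`. -/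
def liftXZ (X Z : G) (hZ : Z ^ (3 * η) = X ^ 3)
    (hZX : (Z * X) ^ 3 = (X ^ 3) ^ (3 * e - 1)) : Gam e η →* G :=
  have hcomm : Commute (X ^ 3) Z := hZ ▸ Commute.zpow_self Z _
  lift X ((Z * X)⁻¹ * (X ^ 3) ^ e) Z
    (by
      have hc : Commute (Z * X)⁻¹ ((X ^ 3) ^ e) :=
        ((hcomm.mul_right (Commute.pow_self X 3)).zpow_left e).symm.inv_left
      rw [hc.mul_pow, inv_pow, hZX]
      generalize X ^ 3 = H
      group)
    hZ
    (by simp [mul_assoc, (hcomm.zpow_left e).eq])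

variable (X Z : G) (hZ : Z ^ (3 * η) = X ^ 3) (hZX : (Z * X) ^ 3 = (X ^ 3) ^ (3 * e - 1))

@[simp]
lemma liftXZ_hG : liftXZ X Z hZ hZX (hG e η) = X ^ 3 := by simp [liftXZ]

@[simp]
lemma liftXZ_xG : liftXZ X Z hZ hZX (xG e η) = X := by simp [liftXZ]

@[simp]
lemma liftXZ_zG : liftXZ X Z hZ hZX (zG e η) = Z := by simp [liftXZ]

end Lift

end Presentation

section MatrixModel

section UpperTriangular

variable {R : Type*} [CommRing R]

/-- The invertible upper triangular matrix with diagonal `(1, r, 1)` and the given entries above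
the diagonal. These matrices carry a faithful model of the subgroup `⟨h⟩` of `Γ(e,η)`. -/
def upper (r : Rˣ) (β γ t : R) : (Matrix (Fin 3) (Fin 3) R)ˣ where
  val := !![1, β, γ; 0, r, t; 0, 0, 1]
  inv := !![1, -(β * r⁻¹.val), -γ + β * r⁻¹.val * t; 0, r⁻¹.val, -(r⁻¹.val * t); 0, 0, 1]
  val_inv := by
    ext i j; fin_cases i <;> fin_cases j <;> simp [Matrix.mul_apply, Fin.sum_univ_succ, mul_assoc]
  inv_val := by
    ext i j; fin_cases i <;> fin_cases j <;> simp [Matrix.mul_apply, Fin.sum_univ_succ, mul_assoc]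

lemma upper_mul (r r' : Rˣ) (β β' γ γ' t t' : R) :
    upper r β γ t * upper r' β' γ' t' =
      upper (r * r') (β' + β * r') (γ' + β * t' + γ) (r * t' + t) := by
  ext i j; fin_cases i <;> fin_cases j <;>
    simp [upper, Matrix.mul_apply, Fin.sum_univ_succ, add_assoc]

/-- The group of central matrices `upper 1 0 γ 0`. -/
def upperCenter : Multiplicative R →* (Matrix (Fin 3) (Fin 3) R)ˣ where
  toFun γ := upper 1 0 (toAdd γ) 0
  map_one' := by
    ext i j; fin_cases i <;> fin_cases j <;> simp [upper]
  map_mul' γ γ' := by simp [upper_mul, add_comm]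

lemma upperCenter_injective : Function.Injective (upperCenter (R := R)) := fun γ γ' h => by
  simpa [upperCenter, upper] using congrArg (fun g => g.val 0 2) h

lemma upper_pow_three (r : Rˣ) (hr : (r : R) ^ 2 + r + 1 = 0) (β γ t : R) :
    upper r β γ t ^ 3 = upperCenter (ofAdd (3 * γ + (2 + r) * β * t)) := by
  simp only [pow_succ, pow_zero, one_mul, upper_mul, upperCenter, MonoidHom.coe_mk, OneHom.coe_mk,
    toAdd_ofAdd]
  congr 1
  · ext; push_cast; linear_combination (r - 1 : R) * hr
  · linear_combination β * hr
  · ring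
  · simp only [Units.val_mul]; linear_combination t * hr

lemma upper_pow_three_eq (r : Rˣ) (hr : (r : R) ^ 2 + r + 1 = 0) (c q : R) :
    upper r ((1 + 2 * r) * q) (c + (1 + r) * q) r ^ 3 = upperCenter (ofAdd (3 * c)) := by
  rw [upper_pow_three r hr]
  congr 2
  linear_combination (2 * r + 3) * q * hr

variable {e η : ℤ}

/-- A linear representation of `Γ(e,η)` of degree three over a ring containing a root `r` of
`r ^ 2 + r + 1`, in which `h` is the unipotent matrix with corner entry `3 * η`. The value of `q` is
chosen to satisfy the relation `(z x) ^ 3 = h ^ (3 * e - 1)`. -/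
def matrixRep (r : Rˣ) (hr : (r : R) ^ 2 + r + 1 = 0) :
    Gam e η →* (Matrix (Fin 3) (Fin 3) R)ˣ :=
  let q : R := (3 * e - 2) * η - 1
  liftXZ (upper r ((1 + 2 * r) * q) (η + (1 + r) * q) r) (upper r 0 1 0)
    (by
      have hZ : upper r 0 1 0 ^ (3 : ℤ) = upperCenter (ofAdd (3 : R)) := by
        simpa using upper_pow_three r hr 0 1 0
      rw [zpow_mul, hZ, upper_pow_three_eq r hr, ← map_zpow, ← ofAdd_zsmul, zsmul_eq_mul, mul_comm])
    (by
      have hr' : ((r * r : Rˣ) : R) ^ 2 + (r * r : Rˣ) + 1 = 0 := by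
        push_cast; linear_combination (r ^ 2 - r + 1 : R) * hr
      rw [upper_mul, upper_pow_three (r * r) hr', upper_pow_three_eq r hr, ← map_zpow,
        ← ofAdd_zsmul, zsmul_eq_mul]
      congr 2
      simp only [q]
      push_cast
      linear_combination r * (2 * r ^ 2 - r + 3) * ((3 * e - 2) * η - 1 : R) * hr)

lemma matrixRep_hG (r : Rˣ) (hr : (r : R) ^ 2 + r + 1 = 0) :
    matrixRep r hr (hG e η) = upperCenter (ofAdd (3 * (η : R))) := by
  rw [matrixRep, liftXZ_hG, upper_pow_three_eq r hr]

end UpperTriangular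

lemma hG_zpow_injective {e η : ℤ} (hη : η ≠ 0) : Function.Injective fun k : ℤ => hG e η ^ k := by
  intro k l hkl
  have hω : (omegaUnit : Eisenstein) ^ 2 + omegaUnit + 1 = 0 := by
    ext <;> simp [omegaUnit, pow_succ]
  have h : upperCenter (ofAdd (k • (3 * η : Eisenstein))) =
      upperCenter (ofAdd (l • (3 * η : Eisenstein))) := by
    simpa only [map_zpow, matrixRep_hG, ofAdd_zsmul] using congrArg (matrixRep omegaUnit hω) hkl
  have h' : k • (3 * η : Eisenstein) = l • (3 * η : Eisenstein) := upperCenter_injective h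
  simpa [hη] using congrArg QuadraticAlgebra.re h'

end MatrixModel

section Flat

variable {e η : ℤ}

/-- The homomorphism `Γ(e,η) → p3` that sends `z` to the rotation by `ω` about the origin and `u`
to the translation by `1`. -/
def flat : Gam e η →* PlaneGroup :=
  let Z : PlaneGroup := SemidirectProduct.inr (ofAdd 1)
  let X : PlaneGroup := Z * SemidirectProduct.inl (ofAdd 1)
  have hX : X ^ 3 = 1 := PlaneGroup.pow_three_eq_one _ (by simp [X, Z])
  have hZ : Z ^ (3 : ℤ) = 1 := PlaneGroup.pow_three_eq_one _ (by simp [Z])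
  have htwo : (ofAdd 1 * ofAdd 1 : Multiplicative (ZMod 3)) ≠ 1 := by decide
  have hZX : (Z * X) ^ 3 = 1 := PlaneGroup.pow_three_eq_one _ (by simpa [X, Z] using htwo)
  liftXZ X Z (by rw [zpow_mul, hZ, hX, one_zpow]) (by rw [hZX, hX, one_zpow])

@[simp]
lemma flat_hG : flat (hG e η) = 1 := by
  simp only [flat, liftXZ_hG]
  exact PlaneGroup.pow_three_eq_one _ (by simp)

@[simp]
lemma flat_zG : flat (zG e η) = SemidirectProduct.inr (ofAdd 1) := by simp [flat]

lemma flat_xG :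
    flat (xG e η) = SemidirectProduct.inr (ofAdd 1) * SemidirectProduct.inl (ofAdd 1) := by
  simp [flat]

@[simp]
lemma flat_uG : flat (uG e η) = SemidirectProduct.inl (ofAdd 1) := by
  simp [uG, flat_xG]

@[simp]
lemma flat_vG : flat (vG e η) = SemidirectProduct.inl (ofAdd ω) := by
  simp only [vG, map_mul, map_inv, flat_xG, flat_zG]
  rw [← map_inv, ← SemidirectProduct.inl_aut]
  simp

/-- The translation part `t` of the isometry `p ↦ ω ^ k p + t` by which an element of `Γ(e,η)`
acts on the plane. -/
def translation (g : Gam e η) : Eisenstein := toAdd (flat g).left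

/-- The exponent `k` of the isometry `p ↦ ω ^ k p + t` by which an element of `Γ(e,η)` acts on
the plane. -/
def angle (g : Gam e η) : ZMod 3 := toAdd (flat g).right

lemma flat_eq_flat_iff_and {g g' : Gam e η} :
    flat g = flat g' ↔ translation g = translation g' ∧ angle g = angle g' :=
  SemidirectProduct.ext_iff

lemma flat_eq_one_iff {g : Gam e η} : flat g = 1 ↔ translation g = 0 ∧ angle g = 0 :=
  SemidirectProduct.ext_iff

lemma translation_mul (g g' : Gam e η) :
    translation (g * g') = translation g + rotation (ofAdd (angle g)) * translation g' := by
  simp [translation, angle]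

/-- The reduction modulo `1 - ω` of the translation part of an element, as a homomorphism. -/
def residueHom : Gam e η →* Multiplicative (ZMod 3) :=
  MonoidHom.mk' (fun g => ofAdd (residue (translation g))) fun g g' => by
    simp [translation_mul]

/-- The reduction modulo `1 - ω` of the translation part of an element. -/
def residueClass (g : Gam e η) : ZMod 3 := residue (translation g)

section angle

@[simp] lemma angle_one : angle (1 : Gam e η) = 0 := by simp [angle]

@[simp] lemma angle_mul (g g' : Gam e η) : angle (g * g') = angle g + angle g' := by simp [angle]

@[simp] lemma angle_inv (g : Gam e η) : angle g⁻¹ = -angle g := by simp [angle]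

@[simp] lemma angle_xG : angle (xG e η) = 1 := by simp [angle, flat_xG]

@[simp] lemma angle_zG : angle (zG e η) = 1 := by simp [angle]

@[simp] lemma angle_uG : angle (uG e η) = 0 := by simp [angle]

end angle

section residueClass

@[simp] lemma residueClass_mul (g g' : Gam e η) :
    residueClass (g * g') = residueClass g + residueClass g' :=
  congrArg toAdd (residueHom.map_mul g g')

@[simp] lemma residueClass_inv (g : Gam e η) : residueClass g⁻¹ = -residueClass g :=
  congrArg toAdd (residueHom.map_inv g)

@[simp] lemma residueClass_zG : residueClass (zG e η) = 0 := by simp [residueClass, translation]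

@[simp] lemma residueClass_uG : residueClass (uG e η) = 1 := by simp [residueClass, translation]

@[simp] lemma residueClass_xG : residueClass (xG e η) = 1 := by
  simp [← zG_mul_uG]

end residueClass

lemma toAdd_apply_eq_residueClass_add_angle (f : Gam e η →* Multiplicative (ZMod 3))
    (g : Gam e η) :
    toAdd (f g) = toAdd (f (uG e η)) * residueClass g + toAdd (f (zG e η)) * angle g := by
  let f' : Gam e η →* Multiplicative (ZMod 3) :=
    MonoidHom.mk' (fun g => ofAdd
      (toAdd (f (uG e η)) * residueClass g + toAdd (f (zG e η)) * angle g)) fun g g' => by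
        rw [← ofAdd_add]; congr 1; simp only [residueClass_mul, angle_mul]; ring
  have hf : f = f' := hom_ext (by simp [f', uG]) (by simp [f'])
  exact congrArg toAdd (DFunLike.congr_fun hf g)

end Flat

section Kernel

section TriangleGroup

variable {Q : Type*} [Group Q] {x z : Q}

lemma conj_mul_inv_of_pow_three (hx : x ^ 3 = 1) (hz : z ^ 3 = 1) :
    z * (x * z⁻¹) * z⁻¹ = (z⁻¹ * x * (x * z⁻¹))⁻¹ := by
  rw [eq_inv_iff_mul_eq_one]
  calc z * (x * z⁻¹) * z⁻¹ * (z⁻¹ * x * (x * z⁻¹)) = z * x * (z ^ 3)⁻¹ * x * x * z⁻¹ := by group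
    _ = z * x ^ 3 * z⁻¹ := by rw [hz, pow_three]; group
    _ = 1 := by rw [hx]; group

lemma commute_inv_mul_mul_inv (hx : x ^ 3 = 1) (hz : z ^ 3 = 1) (hzx : (z * x) ^ 3 = 1) :
    Commute (z⁻¹ * x) (x * z⁻¹) := by
  have hz' : z⁻¹ * z⁻¹ = z := by
    rw [← mul_inv_rev, inv_eq_iff_mul_eq_one, ← pow_three', hz]
  have hconj : z * (x * z⁻¹) * z⁻¹ = (x * z⁻¹ * (z⁻¹ * x))⁻¹ := by
    rw [eq_inv_iff_mul_eq_one]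
    calc z * (x * z⁻¹) * z⁻¹ * (x * z⁻¹ * (z⁻¹ * x))
        = z * x * (z⁻¹ * z⁻¹) * x * (z⁻¹ * z⁻¹) * x := by group
      _ = (z * x) ^ 3 := by rw [hz', pow_three']; group
      _ = 1 := hzx
  exact inv_injective ((conj_mul_inv_of_pow_three hx hz).symm.trans hconj)

end TriangleGroup

variable {e η : ℤ}

instance normal_zpowers_hG : (Subgroup.zpowers (hG e η)).Normal where
  conj_mem n hn g := by
    obtain ⟨k, rfl⟩ := hn
    simp [← ((commute_hG g).zpow_left k).eq]

lemma exists_flat_comp_eq_mk (hη : IsUnit η) :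
    ∃ s : PlaneGroup →* Gam e η ⧸ Subgroup.zpowers (hG e η),
      s.comp flat = QuotientGroup.mk' (Subgroup.zpowers (hG e η)) := by
  set q := QuotientGroup.mk' (Subgroup.zpowers (hG e η))
  have hh : q (hG e η) = 1 := (QuotientGroup.eq_one_iff _).2 (Subgroup.mem_zpowers _)
  have hx : q (xG e η) ^ 3 = 1 := by rw [← map_pow, xG_pow_three, hh]
  have hz : q (zG e η) ^ 3 = 1 := by rw [← map_pow, zG_pow_three hη, map_zpow, hh, one_zpow]
  have hzx : (q (zG e η) * q (xG e η)) ^ 3 = 1 := by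
    rw [← map_mul, zG_mul_xG, map_mul, map_zpow, hh, one_zpow, one_mul, map_inv, inv_pow,
      ← map_pow, yG_pow_three, hh, inv_one]
  refine ⟨PlaneGroup.lift _ _ _ (commute_inv_mul_mul_inv hx hz hzx) hz (by group)
    (conj_mul_inv_of_pow_three hx hz), hom_ext ?_ ?_⟩
  · simp [flat_xG, PlaneGroup.lift, latticeHom_ofAdd_one, zmodPowersHom_ofAdd_one]
  · simp [PlaneGroup.lift, zmodPowersHom_ofAdd_one]

lemma ker_flat (hη : IsUnit η) : (flat (e := e) (η := η)).ker = Subgroup.zpowers (hG e η) := by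
  obtain ⟨s, hs⟩ := exists_flat_comp_eq_mk (e := e) hη
  refine le_antisymm (fun g hg => ?_) (by simp [MonoidHom.mem_ker])
  rw [← QuotientGroup.eq_one_iff, ← QuotientGroup.mk'_apply, ← hs, MonoidHom.comp_apply,
    MonoidHom.mem_ker.1 hg, map_one]

lemma flat_eq_flat_iff (hη : IsUnit η) {g g' : Gam e η} :
    flat g = flat g' ↔ ∃ k : ℤ, g = g' * hG e η ^ k := by
  rw [MonoidHom.eq_iff, ker_flat hη, Subgroup.mem_zpowers_iff]
  simp only [eq_inv_mul_iff_mul_eq, eq_comm]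

end Kernel

section Center

variable {e η : ℤ}

lemma flat_eq_one_of_commute (g : Gam e η) (hu : Commute g (uG e η)) (hz : Commute g (zG e η)) :
    flat g = 1 := by
  have hangle : angle g = 0 := by
    by_contra h
    refine rotation_ne_one (ofAdd (angle g)) h ?_
    have htranslation := congrArg translation hu.eq
    simp only [translation_mul, angle_uG] at htranslation
    simpa [translation, add_comm] using htranslation
  refine flat_eq_one_iff.2 ⟨?_, hangle⟩
  have htranslation : translation g = ω * translation g := by
    simpa [translation_mul, hangle, translation] using congrArg translation hz.eq
  have hre := congrArg QuadraticAlgebra.re htranslation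
  have him := congrArg QuadraticAlgebra.im htranslation
  simp only [QuadraticAlgebra.re_mul, QuadraticAlgebra.im_mul, QuadraticAlgebra.omega_re,
    QuadraticAlgebra.omega_im, zero_mul, mul_one, neg_mul, one_mul, zero_add] at hre him
  ext
  · change (translation g).re = 0
    omega
  · change (translation g).im = 0
    omega

lemma center_eq_zpowers (hη : IsUnit η) :
    Subgroup.center (Gam e η) = Subgroup.zpowers (hG e η) := by
  refine le_antisymm (fun g hg => ?_) ?_
  · rw [← ker_flat hη, MonoidHom.mem_ker]
    rw [Subgroup.mem_center_iff] at hg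
    exact flat_eq_one_of_commute g (hg _).symm (hg _).symm
  · rw [Subgroup.zpowers_le, Subgroup.mem_center_iff]
    exact fun g => (commute_hG g).eq.symm

lemma exists_apply_hG_eq_zpow (hη : IsUnit η) (σ : MulAut (Gam e η)) :
    ∃ m : ℤ, σ (hG e η) = hG e η ^ m := by
  have hcenter : σ (hG e η) ∈ Subgroup.center (Gam e η) := by
    rw [Subgroup.mem_center_iff]
    intro g
    rw [← σ.apply_symm_apply g, ← map_mul, ← map_mul, (commute_hG _).eq]
  rw [center_eq_zpowers hη, Subgroup.mem_zpowers_iff] at hcenter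
  exact hcenter.imp fun _ => Eq.symm

end Center

section Automorphism

variable {e η : ℤ}

lemma flat_apply_eq_flat_apply (hη : IsUnit η) (σ : MulAut (Gam e η)) {g g' : Gam e η}
    (h : flat g = flat g') : flat (σ g) = flat (σ g') := by
  obtain ⟨m, hm⟩ := exists_apply_hG_eq_zpow hη σ
  obtain ⟨k, rfl⟩ := (flat_eq_flat_iff hη).1 h
  simp [hm]

lemma isUnit_of_apply_hG_eq_zpow (hη : IsUnit η) (σ : MulAut (Gam e η)) {m : ℤ}
    (hm : σ (hG e η) = hG e η ^ m) : IsUnit m := by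
  obtain ⟨n, hn⟩ := exists_apply_hG_eq_zpow hη σ⁻¹
  refine IsUnit.of_mul_eq_one n (hG_zpow_injective (e := e) hη.ne_zero ?_)
  have h : σ (σ⁻¹ (hG e η)) = hG e η := σ.apply_symm_apply _
  simpa [hn, hm, zpow_mul] using h

lemma flat_pow_three_eq_one {g : Gam e η} (hg : angle g ≠ 0) : flat (g ^ 3) = 1 := by
  rw [map_pow]
  exact PlaneGroup.pow_three_eq_one _ hg

lemma flat_eq_one_of_flat_pow_three_eq_one {g : Gam e η} (hangle : angle g = 0)
    (hcube : flat (g ^ 3) = 1) : flat g = 1 := by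
  have htriple : 3 * translation g = 0 := by
    rw [← (flat_eq_one_iff.1 hcube).1]
    simp only [pow_three, translation_mul, hangle, ofAdd_zero, map_one, Units.val_one, one_mul]
    ring
  refine flat_eq_one_iff.2 ⟨?_, hangle⟩
  have hre := congrArg QuadraticAlgebra.re htriple
  have him := congrArg QuadraticAlgebra.im htriple
  exact QuadraticAlgebra.ext (by simpa using hre) (by simpa using him)

lemma angle_apply_eq_zero (hη : IsUnit η) (σ : MulAut (Gam e η)) {g : Gam e η}
    (hg : angle g = 0) : angle (σ g) = 0 := by
  by_contra h
  have hcube : flat (g ^ 3) = 1 := by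
    have := flat_apply_eq_flat_apply hη σ⁻¹ (g' := 1)
      ((flat_pow_three_eq_one h).trans (map_one flat).symm)
    simpa using this
  have hflat := flat_apply_eq_flat_apply hη σ (g' := 1)
    ((flat_eq_one_of_flat_pow_three_eq_one hg hcube).trans (map_one flat).symm)
  exact h (by simpa using (flat_eq_flat_iff_and.1 hflat).2)

lemma angle_apply (hη : IsUnit η) (σ : MulAut (Gam e η)) (g : Gam e η) :
    angle (σ g) = angle (σ (zG e η)) * angle g := by
  have h := toAdd_apply_eq_residueClass_add_angle
    ((SemidirectProduct.rightHom.comp flat).comp σ.toMonoidHom) g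
  change angle (σ g) = angle (σ (uG e η)) * _ + angle (σ (zG e η)) * _ at h
  simpa [angle_apply_eq_zero hη σ angle_uG] using h

lemma residueClass_apply (σ : MulAut (Gam e η)) (g : Gam e η) :
    residueClass (σ g) =
      residueClass (σ (uG e η)) * residueClass g + residueClass (σ (zG e η)) * angle g :=
  toAdd_apply_eq_residueClass_add_angle (residueHom.comp σ.toMonoidHom) g

lemma angle_apply_zG_ne_zero (hη : IsUnit η) (σ : MulAut (Gam e η)) :
    angle (σ (zG e η)) ≠ 0 := by
  intro h
  have hz := angle_apply hη σ (σ⁻¹ (zG e η))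
  rw [h, zero_mul, MulAut.apply_inv_self, angle_zG] at hz
  exact one_ne_zero hz

end Automorphism

section Inner

variable {e η : ℤ}

lemma exists_flat_eq_inl (t : Eisenstein) :
    ∃ g : Gam e η, flat g = SemidirectProduct.inl (ofAdd t) := by
  refine ⟨uG e η ^ t.re * vG e η ^ t.im, ?_⟩
  simp only [map_mul, map_zpow, flat_uG, flat_vG]
  rw [← map_zpow SemidirectProduct.inl, ← map_zpow SemidirectProduct.inl, ← map_mul,
    ← ofAdd_zsmul, ← ofAdd_zsmul, ← ofAdd_add]
  congr 2
  ext <;> simp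

lemma exists_flat_conj_eq {g g' : Gam e η} (hg : angle g ≠ 0) (hangle : angle g = angle g')
    (hres : residueClass g = residueClass g') : ∃ c : Gam e η, flat (c * g * c⁻¹) = flat g' := by
  obtain ⟨t, ht⟩ := one_sub_rotation_dvd (ofAdd (angle g)) hg (translation g' - translation g) (by
    rw [map_sub]; exact sub_eq_zero.2 hres.symm)
  obtain ⟨c, hc⟩ := exists_flat_eq_inl (e := e) (η := η) t
  have hc₀ : angle c = 0 := by simp [angle, hc]
  have hct : translation c = t := by simp [translation, hc]
  refine ⟨c, flat_eq_flat_iff_and.2 ⟨?_, by simp [hc₀, hangle]⟩⟩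
  have hinv : translation c⁻¹ = -t := by
    have hone := (flat_eq_one_iff.1 (map_one (flat (e := e) (η := η)))).1
    rw [← mul_inv_cancel c, translation_mul, hc₀, hct] at hone
    simpa using eq_neg_of_add_eq_zero_right hone
  simp only [translation_mul, hc₀, hct, hinv, angle_mul, ofAdd_zero, map_one, Units.val_one,
    one_mul, zero_add]
  linear_combination -ht

lemma translation_apply (σ : MulAut (Gam e η)) (hz : flat (σ (zG e η)) = flat (zG e η))
    (hu : angle (σ (uG e η)) = 0) (g : Gam e η) :
    translation (σ g) = translation (σ (uG e η)) * translation g := by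
  set s := translation (σ (uG e η))
  let scale : PlaneGroup →* PlaneGroup :=
    SemidirectProduct.map (AddMonoidHom.toMultiplicative (AddMonoidHom.mulLeft s)) (MonoidHom.id _)
      fun k => MonoidHom.ext fun t => congrArg ofAdd (mul_left_comm s (rotation k) (toAdd t))
  have hflat_u : flat (σ (uG e η)) = SemidirectProduct.inl (ofAdd s) :=
    SemidirectProduct.ext rfl hu
  have hσ : flat.comp σ.toMonoidHom = scale.comp flat := hom_ext
    (by simp [← zG_mul_uG, hz, hflat_u, scale]) (by simp [hz, scale])
  exact congrArg (fun p => toAdd p.left) (DFunLike.congr_fun hσ g)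

lemma translation_zG_pow_conj (m : ℕ) (g : Gam e η) :
    translation (zG e η ^ m * g * (zG e η ^ m)⁻¹) = rotation (ofAdd 1 ^ m) * translation g := by
  have hz : flat (zG e η ^ m) = SemidirectProduct.inr (ofAdd 1 ^ m) := by simp
  simp [translation, hz, -map_pow]

lemma exists_forall_flat_apply_eq_flat_conj (σ : MulAut (Gam e η))
    (hangle : ∀ g, angle (σ g) = angle g) (hz : flat (σ (zG e η)) = flat (zG e η))
    (hres : residueClass (σ (uG e η)) = 1) :
    ∃ c : Gam e η, ∀ g, flat (σ g) = flat (MulAut.conj c g) := by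
  have hσ := translation_apply σ hz (by simp [hangle])
  have hunit : IsUnit (translation (σ (uG e η))) := by
    refine IsUnit.of_mul_eq_one (translation (σ⁻¹ (uG e η))) ?_
    rw [← hσ, MulAut.apply_inv_self]
    simp [translation]
  obtain ⟨k, hk⟩ := exists_rotation_eq_of_isUnit _ hunit hres
  obtain ⟨m, rfl⟩ := exists_ofAdd_one_pow k
  refine ⟨zG e η ^ m, fun g => flat_eq_flat_iff_and.2 ⟨?_, ?_⟩⟩
  · rw [hσ, ← hk, MulAut.conj_apply, translation_zG_pow_conj]
  · rw [hangle, MulAut.conj_apply, angle_mul, angle_mul, angle_inv, add_neg_cancel_comm]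

lemma eq_one_of_forall_flat_apply_eq (hη : IsUnit η) (σ : MulAut (Gam e η))
    (hσ : ∀ g, flat (σ g) = flat g) : σ = 1 := by
  have hinj := hG_zpow_injective (e := e) hη.ne_zero
  obtain ⟨k, hk⟩ := (flat_eq_flat_iff hη).1 (hσ (xG e η))
  obtain ⟨l, hl⟩ := (flat_eq_flat_iff hη).1 (hσ (zG e η))
  have hh : σ (hG e η) = hG e η ^ (1 + 3 * k) := by
    rw [← xG_pow_three, map_pow, hk, ((commute_hG _).zpow_left k).symm.mul_pow, xG_pow_three,
      ← zpow_natCast, ← zpow_mul, ← zpow_one_add, mul_comm k]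
    rfl
  have hk₀ : k = 0 := by
    rcases Int.isUnit_iff.1 (isUnit_of_apply_hG_eq_zpow hη σ hh) with h | h <;> omega
  have hl₀ : l = 0 := by
    have hz := congrArg σ (zG_pow_three (e := e) hη)
    rw [map_pow, map_zpow, hh, hk₀, hl, ((commute_hG _).zpow_left l).symm.mul_pow,
      zG_pow_three hη, ← zpow_natCast, ← zpow_mul, ← zpow_add, ← zpow_mul] at hz
    have := hinj hz
    push_cast at this
    omega
  have hid : σ.toMonoidHom = MonoidHom.id _ :=
    hom_ext (by simpa [hk₀] using hk) (by simpa [hl₀] using hl)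
  exact MulEquiv.ext fun g => DFunLike.congr_fun hid g

lemma mem_range_conj_of_flat_apply_eq (hη : IsUnit η) (σ : MulAut (Gam e η)) (c : Gam e η)
    (hσ : ∀ g, flat (σ g) = flat (MulAut.conj c g)) : σ ∈ (MulAut.conj (G := Gam e η)).range := by
  refine ⟨c, inv_mul_eq_one.1 (eq_one_of_forall_flat_apply_eq hη _ fun g => ?_)⟩
  simp [MulAut.inv_def, hσ, mul_assoc]

lemma mem_range_conj (hη : IsUnit η) (σ : MulAut (Gam e η))
    (hangle : ∀ g, angle (σ g) = angle g) (hres : ∀ g, residueClass (σ g) = residueClass g) :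
    σ ∈ (MulAut.conj (G := Gam e η)).range := by
  obtain ⟨c, hc⟩ := exists_flat_conj_eq (g := σ (zG e η)) (g' := zG e η)
    (angle_apply_zG_ne_zero hη σ) (hangle _) (hres _)
  obtain ⟨c', hc'⟩ := exists_forall_flat_apply_eq_flat_conj (MulAut.conj c * σ)
    (by simp [hangle]) hc (by simp [hres])
  have hc_mem : MulAut.conj c ∈ (MulAut.conj (G := Gam e η)).range := ⟨c, rfl⟩
  exact (Subgroup.mul_mem_cancel_left _ hc_mem).1
    (mem_range_conj_of_flat_apply_eq hη _ c' hc')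

end Inner

section TypeAction

variable {e η : ℤ}

/-- The factor by which an automorphism multiplies the residue classes of translations. -/
def translationCharacter (hη : IsUnit η) : MulAut (Gam e η) →* (ZMod 3)ˣ :=
  MonoidHom.toHomUnits
    { toFun := fun σ => residueClass (σ (uG e η))
      map_one' := residueClass_uG
      map_mul' := fun σ τ => by
        rw [MulAut.mul_apply, residueClass_apply, angle_apply_eq_zero hη τ angle_uG, mul_zero,
          add_zero] }

/-- The factor by which an automorphism multiplies angles of rotation: `1` if it preserves the
orientation of the plane and `-1` if it reverses it. -/
def angleCharacter (hη : IsUnit η) : MulAut (Gam e η) →* (ZMod 3)ˣ :=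
  MonoidHom.toHomUnits
    { toFun := fun σ => angle (σ (zG e η))
      map_one' := angle_zG
      map_mul' := fun σ τ => angle_apply hη σ (τ (zG e η)) }

/-- The action of automorphisms on the three orbits of centres of rotation. The centre of the
rotation `p ↦ ω ^ k p + t` has type `t / k` modulo `1 - ω`, so that those of `z`, `x` and `y` have
types `0`, `1` and `-1`. -/
def typeAction (hη : IsUnit η) : MulAut (Gam e η) →* Equiv.Perm (ZMod 3) :=
  MonoidHom.toHomPerm
    { toFun := fun σ i =>
        (residueClass (σ (uG e η)) * i + residueClass (σ (zG e η))) / angle (σ (zG e η))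
      map_one' := by
        funext i
        simp only [MulAut.one_apply, residueClass_uG, residueClass_zG, angle_zG, one_mul, add_zero,
          div_one]
        rfl
      map_mul' := fun σ τ => by
        funext i
        have hσ := angle_apply_zG_ne_zero hη σ
        have hτ := angle_apply_zG_ne_zero hη τ
        change _ = (_ * ((_ * i + _) / _) + _) / _
        simp only [MulAut.mul_apply, residueClass_apply σ (τ _), angle_apply hη σ (τ _),
          angle_apply_eq_zero hη τ angle_uG]
        field_simp
        ring }

@[simp]
lemma coe_translationCharacter (hη : IsUnit η) (σ : MulAut (Gam e η)) :
    (translationCharacter hη σ : ZMod 3) = residueClass (σ (uG e η)) := rfl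

@[simp]
lemma coe_angleCharacter (hη : IsUnit η) (σ : MulAut (Gam e η)) :
    (angleCharacter hη σ : ZMod 3) = angle (σ (zG e η)) := rfl

@[simp]
lemma typeAction_apply (hη : IsUnit η) (σ : MulAut (Gam e η)) (i : ZMod 3) :
    typeAction hη σ i =
      (residueClass (σ (uG e η)) * i + residueClass (σ (zG e η))) / angle (σ (zG e η)) := rfl

lemma mem_range_conj_iff (hη : IsUnit η) (σ : MulAut (Gam e η)) :
    σ ∈ (MulAut.conj (G := Gam e η)).range ↔
      residueClass (σ (uG e η)) = 1 ∧ residueClass (σ (zG e η)) = 0 ∧ angle (σ (zG e η)) = 1 := by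
  refine ⟨?_, fun ⟨hu, hz, hangle⟩ => mem_range_conj hη σ (fun g => ?_) fun g => ?_⟩
  · rintro ⟨c, rfl⟩
    simp
  · rw [angle_apply hη, hangle, one_mul]
  · rw [residueClass_apply, hu, hz, one_mul, zero_mul, add_zero]

lemma ker_typeAction_prod_angleCharacter (hη : IsUnit η) :
    ((typeAction hη).prod (angleCharacter hη)).ker = (MulAut.conj (G := Gam e η)).range := by
  ext σ
  rw [mem_range_conj_iff hη, MonoidHom.mem_ker, MonoidHom.prod_apply, Prod.mk_eq_one,
    Units.ext_iff, coe_angleCharacter, Units.val_one, Equiv.Perm.ext_iff]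
  constructor
  · rintro ⟨htype, hangle⟩
    have hz : residueClass (σ (zG e η)) = 0 := by simpa [hangle] using htype 0
    exact ⟨by simpa [hangle, hz] using htype 1, hz, hangle⟩
  · rintro ⟨hu, hz, hangle⟩
    simp [hu, hz, hangle]

end TypeAction

section Automorphisms

variable {e η : ℤ}

lemma flat_zG_mul_xG_mul_yG : flat (zG e η * xG e η * yG e η) = 1 := by
  rw [zG_mul_xG_mul_yG, map_zpow, flat_hG, one_zpow]

@[simp]
lemma angle_yG : angle (yG e η) = 1 := by
  have h := (flat_eq_one_iff.1 (flat_zG_mul_xG_mul_yG (e := e) (η := η))).2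
  simp only [angle_mul, angle_zG, angle_xG] at h
  linear_combination (exp := 1) h - CharP.cast_eq_zero (ZMod 3) 3

@[simp]
lemma residueClass_yG : residueClass (yG e η) = -1 := by
  have h := congrArg residue (flat_eq_one_iff.1 (flat_zG_mul_xG_mul_yG (e := e) (η := η))).1
  change residueClass _ = _ at h
  simp only [residueClass_mul, residueClass_zG, residueClass_xG, zero_add, map_zero] at h
  exact eq_neg_of_add_eq_zero_right h

lemma zG_mul_xG_pow_three : (zG e η * xG e η) ^ 3 = hG e η ^ (3 * e - 1) := by
  rw [zG_mul_xG, ((commute_hG _).zpow_left e).inv_right.mul_pow, inv_pow, yG_pow_three]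
  group

lemma xG_mul_zG_pow_three : (xG e η * zG e η) ^ 3 = hG e η ^ (3 * e - 1) := by
  have hconj : xG e η * zG e η = xG e η * (zG e η * xG e η) * (xG e η)⁻¹ := by group
  rw [hconj, conj_pow, zG_mul_xG_pow_three, ← ((commute_hG _).zpow_left _).eq, mul_inv_cancel_right]

/-- The automorphism inverting `x` and `z`. -/
def invertXZ (e η : ℤ) : MulAut (Gam e η) :=
  let f : Gam e η →* Gam e η := liftXZ (xG e η)⁻¹ (zG e η)⁻¹
    (by rw [inv_zpow, zG_zpow, inv_pow, xG_pow_three])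
    (by rw [← mul_inv_rev, inv_pow, inv_pow, xG_pow_three, xG_mul_zG_pow_three, inv_zpow])
  f.toMulEquiv f (hom_ext (by simp [f]) (by simp [f])) (hom_ext (by simp [f]) (by simp [f]))

@[simp]
lemma invertXZ_xG : invertXZ e η (xG e η) = (xG e η)⁻¹ := by simp [invertXZ]

@[simp]
lemma invertXZ_zG : invertXZ e η (zG e η) = (zG e η)⁻¹ := by simp [invertXZ]

/-- The automorphism that inverts `z` and exchanges `x` with `y⁻¹`. -/
def invertSwap (e η : ℤ) : MulAut (Gam e η) :=
  let f : Gam e η →* Gam e η := lift (yG e η)⁻¹ (xG e η)⁻¹ (zG e η)⁻¹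
    (by rw [inv_pow, inv_pow, xG_pow_three, yG_pow_three])
    (by rw [inv_zpow, zG_zpow, inv_pow, yG_pow_three])
    (by rw [← mul_inv_rev, ← mul_inv_rev, ← mul_assoc, zG_mul_xG_mul_yG, inv_pow, yG_pow_three,
      inv_zpow])
  f.toMulEquiv f (hom_ext (by simp [f]) (by simp [f])) (hom_ext (by simp [f]) (by simp [f]))

@[simp]
lemma invertSwap_xG : invertSwap e η (xG e η) = (yG e η)⁻¹ := by simp [invertSwap]

@[simp]
lemma invertSwap_zG : invertSwap e η (zG e η) = (zG e η)⁻¹ := by simp [invertSwap]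

/-- The automorphism `x ↦ y ↦ z ↦ x` of `Γ(e,1)`. -/
def cycle (e : ℤ) : MulAut (Gam e 1) :=
  let f : Gam e 1 →* Gam e 1 := lift (yG e 1) (zG e 1) (xG e 1)
    (by rw [yG_pow_three, zG_pow_three isUnit_one, zpow_one])
    (by rw [mul_one, yG_pow_three]; exact xG_pow_three)
    (by rw [yG_mul_zG_mul_xG, yG_pow_three])
  f.toMulEquiv (f.comp f) (hom_ext (by simp [f]) (by simp [f]))
    (hom_ext (by simp [f]) (by simp [f]))

@[simp]
lemma cycle_xG : cycle e (xG e 1) = yG e 1 := by simp [cycle]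

@[simp]
lemma cycle_zG : cycle e (zG e 1) = xG e 1 := by simp [cycle]

end Automorphisms

section EtaOne

variable {e η : ℤ}

lemma typeAction_invertXZ (hη : IsUnit η) : typeAction hη (invertXZ e η) = 1 := by
  ext i : 1
  simp [uG]

lemma typeAction_invertSwap (hη : IsUnit η) :
    typeAction hη (invertSwap e η) = Equiv.neg (ZMod 3) := by
  ext i : 1
  simp [uG, div_neg]

lemma typeAction_cycle : typeAction isUnit_one (cycle e) = Equiv.addRight 1 := by
  ext i : 1
  have h : (-1 + -1 : ZMod 3) = 1 := by decide
  simp [uG, h]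

lemma angleCharacter_invertXZ (hη : IsUnit η) : angleCharacter hη (invertXZ e η) = -1 := by
  ext; simp

lemma angleCharacter_invertSwap (hη : IsUnit η) : angleCharacter hη (invertSwap e η) = -1 := by
  ext; simp

lemma angleCharacter_cycle : angleCharacter isUnit_one (cycle e) = 1 := by
  ext; simp

lemma exists_addRight_pow_mul_neg_pow (p : Equiv.Perm (ZMod 3)) (ε : (ZMod 3)ˣ) :
    ∃ i : Fin 3, ∃ j k : Fin 2, Equiv.addRight 1 ^ (i : ℕ) * Equiv.neg (ZMod 3) ^ (j : ℕ) = p ∧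
      (-1 : (ZMod 3)ˣ) ^ (j : ℕ) * (-1) ^ (k : ℕ) = ε := by
  revert p ε
  decide

lemma typeAction_prod_angleCharacter_surjective :
    Function.Surjective ((typeAction (e := e) isUnit_one).prod (angleCharacter isUnit_one)) := by
  rintro ⟨p, ε⟩
  obtain ⟨i, j, k, hp, hε⟩ := exists_addRight_pow_mul_neg_pow p ε
  refine ⟨cycle e ^ (i : ℕ) * invertSwap e 1 ^ (j : ℕ) * invertXZ e 1 ^ (k : ℕ), ?_⟩
  rw [MonoidHom.prod_apply, Prod.mk.injEq]
  constructor
  · simpa only [map_mul, map_pow, typeAction_cycle, typeAction_invertSwap, typeAction_invertXZ,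
      one_pow, mul_one] using hp
  · simpa only [map_mul, map_pow, angleCharacter_cycle, angleCharacter_invertSwap,
      angleCharacter_invertXZ, one_pow, one_mul] using hε

end EtaOne

section EtaNegOne

variable {e η : ℤ}

lemma exists_pow_three_eq_zpow_of_eq (hη : IsUnit η) {g w : Gam e η} {k : ℤ} (hg : angle g ≠ 0)
    (hangle : angle g = angle w) (hres : residueClass g = residueClass w)
    (hw : w ^ 3 = hG e η ^ k) (hk : (k : ZMod 3) = angle w) :
    ∃ m : ℤ, (m : ZMod 3) = angle g ∧ g ^ 3 = hG e η ^ m := by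
  obtain ⟨c, hc⟩ := exists_flat_conj_eq hg hangle hres
  obtain ⟨l, hl⟩ := (flat_eq_flat_iff hη).1 hc
  refine ⟨k + l * 3, ?_, ?_⟩
  · have hthree : ((3 : ℤ) : ZMod 3) = 0 := by decide
    rw [Int.cast_add, Int.cast_mul, hk, hangle, hthree, mul_zero, add_zero]
  calc g ^ 3 = c⁻¹ * (c * g * c⁻¹) ^ 3 * c := by rw [conj_pow]; group
    _ = c⁻¹ * hG e η ^ (k + l * 3) * c := by
      rw [hl, ((commute_hG _).zpow_left l).symm.mul_pow, hw, zpow_add, zpow_mul]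
      norm_cast
    _ = hG e η ^ (k + l * 3) := by
      rw [mul_assoc, ((commute_hG c).zpow_left _).eq, inv_mul_cancel_left]

lemma exists_pow_three_eq_zpow (hη : IsUnit η) {g : Gam e η} (hg : angle g ≠ 0)
    (hres : residueClass g ≠ 0) : ∃ m : ℤ, (m : ZMod 3) = angle g ∧ g ^ 3 = hG e η ^ m := by
  have hcases : ∀ a : ZMod 3, a ≠ 0 → a = 1 ∨ a = -1 := by decide
  have hx := xG_pow_three (e := e) (η := η)
  have hy := yG_pow_three (e := e) (η := η)
  rcases hcases _ hg with ha | ha <;> rcases hcases _ hres with hr | hr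
  · exact exists_pow_three_eq_zpow_of_eq hη hg (w := xG e η) (k := 1) (by simp [ha]) (by simp [hr])
      (by simp [hx]) (by simp)
  · exact exists_pow_three_eq_zpow_of_eq hη hg (w := yG e η) (k := 1) (by simp [ha]) (by simp [hr])
      (by simp [hy]) (by simp)
  · exact exists_pow_three_eq_zpow_of_eq hη hg (w := (yG e η)⁻¹) (k := -1) (by simp [ha])
      (by simp [hr]) (by simp [hy]) (by simp)
  · exact exists_pow_three_eq_zpow_of_eq hη hg (w := (xG e η)⁻¹) (k := -1) (by simp [ha])
      (by simp [hr]) (by simp [hx]) (by simp)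

lemma exists_residueClass_apply_ne_zero (σ : MulAut (Gam e η))
    (hz : residueClass (σ (zG e η)) ≠ 0) :
    ∃ w : Gam e η, w ^ 3 = hG e η ∧ angle w = 1 ∧ residueClass (σ w) ≠ 0 := by
  by_cases hx : residueClass (σ (xG e η)) = 0
  · refine ⟨yG e η, yG_pow_three, angle_yG, fun hy => hz ?_⟩
    have htwo : (2 : ZMod 3) ≠ 0 := by decide
    rw [residueClass_apply, residueClass_xG, angle_xG] at hx
    rw [residueClass_apply, residueClass_yG, angle_yG] at hy
    refine (mul_eq_zero.1 ?_).resolve_left htwo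
    linear_combination hx + hy
  · exact ⟨xG e η, xG_pow_three, angle_xG, hx⟩

lemma residueClass_apply_zG_eq_zero (σ : MulAut (Gam e (-1))) :
    residueClass (σ (zG e (-1))) = 0 := by
  by_contra hz
  have hη : IsUnit (-1 : ℤ) := isUnit_one.neg
  have hε := angle_apply_zG_ne_zero hη σ
  obtain ⟨w, hw, hw_angle, hw_res⟩ := exists_residueClass_apply_ne_zero σ hz
  have hw_angle' : angle (σ w) = angle (σ (zG e (-1))) := by
    rw [angle_apply hη, hw_angle, mul_one]
  obtain ⟨k, hk, hzk⟩ := exists_pow_three_eq_zpow hη hε hz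
  obtain ⟨l, hl, hwl⟩ := exists_pow_three_eq_zpow hη (hw_angle'.trans_ne hε) hw_res
  have hzw : zG e (-1) ^ 3 * w ^ 3 = 1 := by
    rw [zG_pow_three hη, hw, zpow_neg_one, inv_mul_cancel]
  have hkl : k + l = 0 := by
    apply hG_zpow_injective (e := e) hη.ne_zero
    change hG e (-1) ^ (k + l) = hG e (-1) ^ (0 : ℤ)
    rw [zpow_add, ← hzk, ← hwl, ← map_pow, ← map_pow, ← map_mul, hzw, map_one, zpow_zero]
  have htwo : (2 : ZMod 3) ≠ 0 := by decide
  have hmod := congrArg (Int.cast : ℤ → ZMod 3) hkl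
  rw [Int.cast_add, hk, hl, hw_angle', Int.cast_zero, ← two_mul] at hmod
  exact hε ((mul_eq_zero.1 hmod).resolve_left htwo)

lemma ker_translationCharacter_prod_angleCharacter (hη : IsUnit (-1 : ℤ)) :
    ((translationCharacter hη).prod (angleCharacter hη)).ker =
      (MulAut.conj (G := Gam e (-1))).range := by
  ext σ
  simp [mem_range_conj_iff hη, MonoidHom.mem_ker, Units.ext_iff, residueClass_apply_zG_eq_zero]

lemma translationCharacter_invertXZ (hη : IsUnit η) :
    translationCharacter hη (invertXZ e η) = -1 := by
  ext; simp [uG]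

lemma translationCharacter_invertSwap (hη : IsUnit η) :
    translationCharacter hη (invertSwap e η) = 1 := by
  ext; simp [uG]

lemma translationCharacter_prod_angleCharacter_surjective (hη : IsUnit η) :
    Function.Surjective ((translationCharacter (e := e) hη).prod (angleCharacter hη)) := by
  rintro ⟨δ, ε⟩
  obtain ⟨j, k, hδ, hε⟩ : ∃ j k : Fin 2, (-1 : (ZMod 3)ˣ) ^ (k : ℕ) = δ ∧
      (-1 : (ZMod 3)ˣ) ^ (j : ℕ) * (-1) ^ (k : ℕ) = ε := by
    revert δ ε
    decide
  refine ⟨invertSwap e η ^ (j : ℕ) * invertXZ e η ^ (k : ℕ), ?_⟩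
  rw [MonoidHom.prod_apply, Prod.mk.injEq]
  constructor
  · simpa only [map_mul, map_pow, translationCharacter_invertSwap, translationCharacter_invertXZ,
      one_pow, one_mul] using hδ
  · simpa only [map_mul, map_pow, angleCharacter_invertSwap, angleCharacter_invertXZ] using hε

end EtaNegOne

/-- The identification of `{1, -1} ⊂ 𝔽₃` with `ℤ/2ℤ`. -/
noncomputable def unitsEquiv : (ZMod 3)ˣ ≃* Multiplicative (ZMod 2) :=
  mulEquivOfPrimeCardEq (p := 2) (by rw [Nat.card_eq_fintype_card, ZMod.card_units]) (by simp)

end Gam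

theorem statement18_general (e : ℤ) :
    (∃ Θ : MulAut (Gam e 1) →* Equiv.Perm (Fin 3) × Multiplicative (ZMod 2),
      Function.Surjective Θ ∧
      Θ.ker = (MulAut.conj : Gam e 1 →* MulAut (Gam e 1)).range) ∧
    (∃ Θ : MulAut (Gam e (-1)) →* Multiplicative (ZMod 2) × Multiplicative (ZMod 2),
      Function.Surjective Θ ∧
      Θ.ker = (MulAut.conj : Gam e (-1) →* MulAut (Gam e (-1))).range) := by
  constructor
  · let iso : Equiv.Perm (ZMod 3) × (ZMod 3)ˣ ≃* Equiv.Perm (Fin 3) × Multiplicative (ZMod 2) :=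
      (ZMod.finEquiv 3).symm.toEquiv.permCongrHom.prodCongr Gam.unitsEquiv
    refine ⟨(iso : _ →* _).comp ((Gam.typeAction isUnit_one).prod (Gam.angleCharacter isUnit_one)),
      iso.surjective.comp Gam.typeAction_prod_angleCharacter_surjective, ?_⟩
    rw [MonoidHom.ker_mulEquiv_comp, Gam.ker_typeAction_prod_angleCharacter]
  · have hη : IsUnit (-1 : ℤ) := isUnit_one.neg
    let iso := Gam.unitsEquiv.prodCongr Gam.unitsEquiv
    refine ⟨(iso : _ →* _).comp ((Gam.translationCharacter hη).prod (Gam.angleCharacter hη)),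
      iso.surjective.comp (Gam.translationCharacter_prod_angleCharacter_surjective hη), ?_⟩
    rw [MonoidHom.ker_mulEquiv_comp, Gam.ker_translationCharacter_prod_angleCharacter]

/-- For every even integer `e`, the outer automorphism group
`Out(Γ(e,1)) = Aut(Γ(e,1))/Inn(Γ(e,1))` is isomorphic to `S₃ × ℤ/2ℤ`, and
`Out(Γ(e,−1))` is isomorphic to `(ℤ/2ℤ)²`.  (Equivalently: there are surjective
homomorphisms from the automorphism groups onto `S₃ × ℤ/2ℤ`, resp. `(ℤ/2ℤ)²`,
whose kernels are exactly the inner automorphisms, i.e. the range of the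
conjugation homomorphism.) -/
theorem statement18 :
    ∀ e : ℤ, Even e →
      (∃ Θ : MulAut (Gam e 1) →* Equiv.Perm (Fin 3) × Multiplicative (ZMod 2),
        Function.Surjective Θ ∧
        Θ.ker = (MulAut.conj : Gam e 1 →* MulAut (Gam e 1)).range) ∧
      (∃ Θ : MulAut (Gam e (-1)) →* Multiplicative (ZMod 2) × Multiplicative (ZMod 2),
        Function.Surjective Θ ∧
        Θ.ker = (MulAut.conj : Gam e (-1) →* MulAut (Gam e (-1))).range) :=
  fun e _ => statement18_general e
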